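/- arXiv:1001.2451 — 2 statements merged into one kernel-verified Lean document; each statement's English description precedes it below -/
import Mathlib

section
/- Let n, m ∈ ℕ with m ≤ n−1, let ã₀,…,ã_{n−2} be complex numbers with |ã_j| < 1, let Φ̃_j be generated by Φ̃₀ = 1 and Φ̃_j(z) = zΦ̃_{j−1}(z) − ã_{j−1}Φ̃*_{j−1}(z), and let Ψ̃_j be generated by Ψ̃₀ = 1 and Ψ̃_j(z) = zΨ̃_{j−1}(z) + ã_{j−1}Ψ̃*_{j−1}(z). Fix η ∈ 𝕋 and define q₀(z) = 1 and q_j(z) = z q_{j−1}(z) − η·conj(ã_{n−1−j})·q*_{j−1}(z) for j = 1,…,m. Then for every j = 1,…,m, z Φ̃_{n−1} + η Φ̃*_{n−1} = z q_j Φ̃_{n−1−j} + η q_j* Φ̃*_{n−1−j} and z Ψ̃_{n−1} − η Ψ̃*_{n−1} = z q_j Ψ̃_{n−1−j} − η q_j* Ψ̃*_{n−1−j}, where q_j has degree j; moreover each q_j has all its zeros in the open unit disk 𝔻. -/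
/-!
Everything follows from the Szegő step and its reversal: if `deg P ≤ j` and
`Q = z P - b P*`, then `Q* = P* - conj b · z P` at degree `j + 1` (`pstar_step`).

Expanding one step of `z q Φ + η q* Φ*` in `Φ` and regrouping by `Φ` and `Φ*` instead of `q` and
`q*` turns a step of `Φ` with parameter `a` into a step of `q` with parameter `η conj a`, because
`η conj η = 1`; this is `pairing_eq`. The second identity is the first one for `-a` and `-η`, which
generate `Ψ` and leave `η conj a`, hence `q`, unchanged.

For the zeros, `|Q|² - |Q*|² = (1 - |b|²)(|z P|² - |P*|²)` shows that `|q_j*| ≤ |q_j|` and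
`q_j ≠ 0` persist along the recursion at each point with `|z| ≥ 1` (`szego_nonvanishing`).
-/

open Polynomial

/-- The reversed polynomial `P*(z) = z^n conj(P(1/conj z))` at degree `n`. -/
noncomputable def pstar (n : ℕ) (P : Polynomial ℂ) : Polynomial ℂ :=
  Polynomial.reflect n (P.map (starRingEnd ℂ))

lemma natDegree_pstar_le {n : ℕ} {P : Polynomial ℂ} (hP : P.natDegree ≤ n) :
    (pstar n P).natDegree ≤ n := by
  refine (natDegree_reflect_le).trans ?_
  exact max_le le_rfl ((natDegree_map_le).trans hP)

lemma pstar_pstar (n : ℕ) (P : Polynomial ℂ) : pstar n (pstar n P) = P := by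
  ext i
  simp [pstar, coeff_reflect]

lemma pstar_one : pstar 0 1 = 1 := by
  simp [pstar]

/-- The reversed Szegő step. -/
lemma pstar_step {j : ℕ} {P : Polynomial ℂ} (hP : P.natDegree ≤ j) (b : ℂ) :
    pstar (j + 1) (X * P - C b * pstar j P) =
      pstar j P - C ((starRingEnd ℂ) b) * (X * P) := by
  have h1 : pstar (j + 1) (X * P) = pstar j P := by
    have h := reflect_mul (X : ℂ[X]) (P.map (starRingEnd ℂ)) (F := 1) (G := j)
      natDegree_X_le ((natDegree_map_le).trans hP)
    rw [reflect_one_X, one_mul, add_comm 1 j] at h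
    simpa [pstar] using h
  have h2 : pstar (j + 1) (pstar j P) = X * P := by
    have h := reflect_mul (1 : ℂ[X]) ((pstar j P).map (starRingEnd ℂ)) (F := 1) (G := j)
      (by simp) ((natDegree_map_le).trans (natDegree_pstar_le hP))
    have hP2 : reflect j ((pstar j P).map (starRingEnd ℂ)) = P := pstar_pstar j P
    rw [hP2, one_mul, add_comm 1 j] at h
    simpa [pstar] using h
  have h3 : pstar (j + 1) (X * P - C b * pstar j P) =
      pstar (j + 1) (X * P) - C ((starRingEnd ℂ) b) * pstar (j + 1) (pstar j P) := by
    simp only [pstar, Polynomial.map_sub, Polynomial.map_mul, map_C, reflect_sub,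
      reflect_C_mul]
  rw [h3, h1, h2]

lemma szego_monic {j : ℕ} {P : Polynomial ℂ} (hm : P.Monic) (hP : P.natDegree = j) (b : ℂ) :
    (X * P - C b * pstar j P).Monic ∧ (X * P - C b * pstar j P).natDegree = j + 1 := by
  have hXm : (X * P).Monic := monic_X.mul hm
  have hXd : (X * P).natDegree = j + 1 := by
    rw [monic_X.natDegree_mul hm, natDegree_X, hP, add_comm]
  have hlt : (C b * pstar j P).natDegree < (X * P).natDegree := by
    have := (natDegree_C_mul_le b (pstar j P)).trans (natDegree_pstar_le hP.le)
    omega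
  refine ⟨hXm.sub_of_left (degree_lt_degree hlt), ?_⟩
  rw [natDegree_sub_eq_left_of_natDegree_lt hlt, hXd]

/-- One step of the recursion, at a point `z` outside the open disk, with `u = P(z)` and
`v = P*(z)`. -/
lemma szego_nonvanishing {z b u v : ℂ} (hz : 1 ≤ ‖z‖) (hb : ‖b‖ < 1) (hu : u ≠ 0)
    (huv : ‖v‖ ≤ ‖u‖) :
    z * u - b * v ≠ 0 ∧ ‖v - (starRingEnd ℂ) b * (z * u)‖ ≤ ‖z * u - b * v‖ := by
  have hu0 : 0 < ‖u‖ := norm_pos_iff.mpr hu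
  have hw : ‖u‖ ≤ ‖z * u‖ := by
    rw [norm_mul]; nlinarith
  generalize z * u = w at *
  constructor
  · intro h
    have h1 : ‖w‖ = ‖b‖ * ‖v‖ := by rw [sub_eq_zero.mp h, norm_mul]
    nlinarith [norm_nonneg v, norm_nonneg b]
  · have hvw : ‖v‖ ^ 2 ≤ ‖w‖ ^ 2 := by gcongr; linarith
    have hb2 : ‖b‖ ^ 2 ≤ 1 := by nlinarith [norm_nonneg b]
    refine le_of_pow_le_pow_left₀ two_ne_zero (norm_nonneg _) ?_
    have key : ‖w - b * v‖ ^ 2 - ‖v - (starRingEnd ℂ) b * w‖ ^ 2 =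
        (1 - ‖b‖ ^ 2) * (‖w‖ ^ 2 - ‖v‖ ^ 2) := by
      simp only [Complex.sq_norm, Complex.normSq_apply, Complex.sub_re, Complex.sub_im,
        Complex.mul_re, Complex.mul_im, Complex.conj_re, Complex.conj_im]
      ring
    nlinarith [mul_nonneg (sub_nonneg.mpr hb2) (sub_nonneg.mpr hvw)]

lemma szego_natDegree {N : ℕ} {a : ℕ → ℂ} {P : ℕ → Polynomial ℂ} (h0 : P 0 = 1)
    (hrec : ∀ j < N, P (j + 1) = X * P j - C (a j) * pstar j (P j)) :
    ∀ j ≤ N, (P j).Monic ∧ (P j).natDegree = j := by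
  intro j
  induction j with
  | zero => intro _; simp [h0]
  | succ j ih =>
    intro hj
    obtain ⟨hm, hd⟩ := ih (by omega)
    rw [hrec j (by omega)]
    exact szego_monic hm hd (a j)

/-- The pairing `z q_j P_{N-j} + η q_j* P_{N-j}*` does not depend on `j`. -/
lemma pairing_eq {N m : ℕ} (hmN : m ≤ N) {a : ℕ → ℂ} {P q : ℕ → Polynomial ℂ} {η : ℂ}
    (hη : ‖η‖ = 1) (h0 : P 0 = 1)
    (hrec : ∀ j < N, P (j + 1) = X * P j - C (a j) * pstar j (P j))
    (hq0 : q 0 = 1)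
    (hqrec : ∀ j < m, q (j + 1) =
      X * q j - C (η * (starRingEnd ℂ) (a (N - (j + 1)))) * pstar j (q j)) :
    ∀ j ≤ m, X * P N + C η * pstar N (P N) =
      X * q j * P (N - j) + C η * pstar j (q j) * pstar (N - j) (P (N - j)) := by
  intro j
  induction j with
  | zero => intro _; simp [hq0, pstar_one]
  | succ j ih =>
    intro hj
    rw [ih (by omega)]
    have hqd := (szego_natDegree (a := fun j => η * (starRingEnd ℂ) (a (N - (j + 1))))
      hq0 hqrec j (by omega)).2
    rw [hqrec j (by omega), pstar_step hqd.le]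
    obtain ⟨k, hk⟩ : ∃ k, N = k + (j + 1) := ⟨N - (j + 1), by omega⟩
    have e1 : N - j = k + 1 := by omega
    have e2 : N - (j + 1) = k := by omega
    rw [e1, e2, hrec k (by omega),
      pstar_step (szego_natDegree h0 hrec k (by omega)).2.le]
    have hηη : C η * C ((starRingEnd ℂ) η) = (1 : ℂ[X]) := by
      rw [← C_mul, Complex.mul_conj', hη]; simp
    simp only [map_mul, Complex.conj_conj]
    linear_combination (X * q j * C (a k) * pstar k (P k)) * hηη

theorem stmt7
    (n m : ℕ) (hn : 1 ≤ n) (hm : 1 ≤ m) (hmn : m ≤ n - 1)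
    (a : ℕ → ℂ) (ha : ∀ j < n - 1, ‖a j‖ < 1)
    (Φt : ℕ → Polynomial ℂ) (hΦt0 : Φt 0 = 1)
    (hΦtrec : ∀ j < n - 1, Φt (j + 1) = X * Φt j - C (a j) * pstar j (Φt j))
    (Ψt : ℕ → Polynomial ℂ) (hΨt0 : Ψt 0 = 1)
    (hΨtrec : ∀ j < n - 1, Ψt (j + 1) = X * Ψt j + C (a j) * pstar j (Ψt j))
    (η : ℂ) (hη : ‖η‖ = 1)
    (q : ℕ → Polynomial ℂ) (hq0 : q 0 = 1)
    (hqrec : ∀ j, 1 ≤ j → j ≤ m →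
      q j = X * q (j - 1) -
        C (η * (starRingEnd ℂ) (a (n - 1 - j))) * pstar (j - 1) (q (j - 1))) :
    ∀ j, 1 ≤ j → j ≤ m →
      (X * Φt (n - 1) + C η * pstar (n - 1) (Φt (n - 1)) =
        X * q j * Φt (n - 1 - j) +
          C η * pstar j (q j) * pstar (n - 1 - j) (Φt (n - 1 - j))) ∧
      (X * Ψt (n - 1) - C η * pstar (n - 1) (Ψt (n - 1)) =
        X * q j * Ψt (n - 1 - j) -
          C η * pstar j (q j) * pstar (n - 1 - j) (Ψt (n - 1 - j))) ∧
      (q j).natDegree = j ∧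
      (∀ z : ℂ, (q j).eval z = 0 → ‖z‖ < 1) := by
  have hqrec' : ∀ j < m, q (j + 1) =
      X * q j - C (η * (starRingEnd ℂ) (a (n - 1 - (j + 1)))) * pstar j (q j) :=
    fun j hj => hqrec (j + 1) (by omega) (by omega)
  have hqdeg := szego_natDegree (a := fun j => η * (starRingEnd ℂ) (a (n - 1 - (j + 1))))
    hq0 hqrec'
  intro j hj1 hjm
  refine ⟨pairing_eq hmn hη hΦt0 hΦtrec hq0 hqrec' j hjm, ?_, (hqdeg j hjm).2, ?_⟩
  · have h := pairing_eq (a := fun j => -a j) (η := -η) hmn (by simpa using hη) hΨt0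
      (fun j hj => by rw [hΨtrec j hj]; simp) hq0
      (fun j hj => by rw [hqrec' j hj]; simp) j hjm
    simpa [sub_eq_add_neg] using h
  · intro z
    contrapose!
    intro hz
    have main : ∀ i ≤ m, (q i).eval z ≠ 0 ∧ ‖(pstar i (q i)).eval z‖ ≤ ‖(q i).eval z‖ := by
      intro i
      induction i with
      | zero => intro _; simp [hq0, pstar_one]
      | succ i ih =>
        intro hi
        obtain ⟨hne, hle⟩ := ih (by omega)
        have hb : ‖η * (starRingEnd ℂ) (a (n - 1 - (i + 1)))‖ < 1 := by
          rw [norm_mul, hη, one_mul, RCLike.norm_conj]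
          exact ha _ (by omega)
        rw [hqrec' i (by omega), pstar_step (hqdeg i (by omega)).2.le]
        simpa only [eval_sub, eval_mul, eval_X, eval_C] using
          szego_nonvanishing hz hb hne hle
    exact (main j hjm).1
end

section
/- Let p_{n−1} be a monic polynomial of degree n−1 with all zeros in the open unit disk 𝔻, let η ∈ 𝕋, and set p_n(z) = z p_{n−1}(z). Then η p_n* + p_n and η p_n* − p_n have all their zeros on the unit circle, these zeros are simple, the zeros of η p_n* − p_n and of η p_n* + p_n strictly interlace on the circle, and if e^{iφ₁},…,e^{iφ_n} (0 ≤ φ₁ < ⋯ < φ_n < 2π) are the zeros of η p_n* + p_n other than the origin's contribution, then μ_s := (η p_n* − p_n)(e^{iφ_s}) / (2i · d/dφ[(p_n + η p_n*)(e^{iφ})]|_{φ=φ_s}) is a positive real number for each s = 1,…,n. -/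
/-!
On the unit circle `pstar n Pn` takes the value `z ^ n * conj (Pn z)`, so there
`Pn (e^{iφ}) = e^{iψ(φ)} * η * (pstar n Pn) (e^{iφ})` for a real phase `ψ`, and
`Qplus`, `Qminus` equal `G (1 + e^{iψ})`, `G (1 - e^{iψ})` with `G = η * pstar n Pn` zero-free on
the circle. Factoring `Pn = X * ∏ (X - a)`, the phase is written down explicitly: the factor `X`
contributes `φ`, and a factor `X - a` contributes `φ - 2 * arg (1 - conj a * e^{iφ})`, which is
smooth because `|a| < 1`. Its derivative is the Poisson kernel `Re ((1 + w) / (1 - w))` at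
`w = conj a * e^{iφ}`, hence positive, so `ψ` is strictly increasing and
`ψ (φ + 2π) = ψ φ + 2πn` (`exists_phase`).

By the intermediate value theorem the phase takes on `[0, 2π)` the `2n` consecutive values
`π * k, …, π * (k + 2n - 1)` (`exists_levels`). At odd multiples of `π` the polynomial `Qplus`
vanishes, at even ones `Qminus` does; this is the interlacing. Each polynomial has degree at most
`n`, so these are all of its zeros (`zeros_of_phase`). At a zero of `Qplus` the derivative of
`Qplus (e^{iφ})` is `-i ψ' G` and `Qminus = 2 G`, so `μ = 1 / ψ' > 0`.
-/

open Polynomial Real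

/-! ### The reversed polynomial on the circle -/

lemma pstar_natDegree_le (n : ℕ) (P : ℂ[X]) (hP : P.natDegree ≤ n) :
    (pstar n P).natDegree ≤ n := by
  rw [natDegree_le_iff_coeff_eq_zero]
  intro N hN
  rw [pstar, coeff_reflect, revAt_eq_self_of_lt hN, coeff_map,
    coeff_eq_zero_of_natDegree_lt (by omega), map_zero]

lemma conj_exp_I_mul (φ : ℝ) :
    (starRingEnd ℂ) (Complex.exp (Complex.I * φ)) = (Complex.exp (Complex.I * φ))⁻¹ := by
  rw [← Complex.exp_conj, ← Complex.exp_neg]; simp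

lemma norm_exp_I_mul (φ : ℝ) : ‖Complex.exp (Complex.I * φ)‖ = 1 := by
  rw [mul_comm]; exact Complex.norm_exp_ofReal_mul_I φ

lemma pstar_eval_circle (n : ℕ) (P : ℂ[X]) (hP : P.natDegree ≤ n) (φ : ℝ) :
    (pstar n P).eval (Complex.exp (Complex.I * φ)) =
      Complex.exp (Complex.I * φ) ^ n *
        (starRingEnd ℂ) (P.eval (Complex.exp (Complex.I * φ))) := by
  set z := Complex.exp (Complex.I * φ) with hz
  have hz0 : z ≠ 0 := Complex.exp_ne_zero _
  let _ : Invertible z⁻¹ := invertibleOfNonzero (inv_ne_zero hz0)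
  have h := eval₂_reflect_mul_pow (RingHom.id ℂ) z⁻¹ n (P.map (starRingEnd ℂ))
    ((natDegree_map_le).trans hP)
  have h2 : (P.map (starRingEnd ℂ)).eval z⁻¹ = (starRingEnd ℂ) (P.eval z) := by
    rw [hz, ← conj_exp_I_mul, eval_map, eval₂_hom]
  rw [← h2]
  simp only [invOf_eq_inv, inv_inv] at h
  change (pstar n P).eval z * _ = (P.map (starRingEnd ℂ)).eval z⁻¹ at h
  rw [← h, mul_left_comm, ← mul_pow, mul_inv_cancel₀ hz0, one_pow, mul_one]

/-! ### The phase and its levels -/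

lemma hasDerivAt_exp_I_mul {f : ℝ → ℝ} {f' x : ℝ} (hf : HasDerivAt f f' x) :
    HasDerivAt (fun t : ℝ => Complex.exp (Complex.I * (f t : ℂ)))
      (Complex.exp (Complex.I * (f x : ℂ)) * (Complex.I * (f' : ℂ))) x :=
  ((hf.ofReal_comp).const_mul Complex.I).cexp

/-- When `|a| < 1`, the point `1 - conj a * e^{iφ}` stays in the right half-plane, so its argument
is differentiable; `1 - 2 * d` is the Poisson kernel, hence positive. -/
lemma exists_hasDerivAt_arg (a : ℂ) (ha : ‖a‖ < 1) (φ : ℝ) :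
    ∃ d : ℝ, HasDerivAt
      (fun t : ℝ => Complex.arg (1 - (starRingEnd ℂ) a * Complex.exp (Complex.I * (t : ℂ)))) d φ ∧
      0 < 1 - 2 * d := by
  set w := (starRingEnd ℂ) a * Complex.exp (Complex.I * (φ : ℂ)) with hw
  have hwn : ‖w‖ < 1 := by
    rw [hw, norm_mul, norm_exp_I_mul, mul_one, RCLike.norm_conj]; exact ha
  have hre : 0 < (1 - w).re := by
    have := (abs_le.mp (Complex.abs_re_le_norm w)).2
    simp; linarith
  have hu : HasDerivAt
      (fun t : ℝ => 1 - (starRingEnd ℂ) a * Complex.exp (Complex.I * (t : ℂ)))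
      (-(w * Complex.I)) φ := by
    have h := ((hasDerivAt_exp_I_mul (hasDerivAt_id φ)).const_mul ((starRingEnd ℂ) a)).const_sub 1
    refine h.congr_deriv ?_
    simp only [hw, id_eq, Complex.ofReal_one]; ring
  have hlog := hu.clog_real (Or.inl hre)
  have him := Complex.imCLM.hasFDerivAt.comp_hasDerivAt φ hlog
  refine ⟨(-(w * Complex.I) / (1 - w)).im, ?_, ?_⟩
  · refine him.congr_of_eventuallyEq (Filter.Eventually.of_forall fun t => ?_)
    exact (Complex.log_im _).symm
  · have hns : 0 < Complex.normSq (1 - w) := by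
      rw [Complex.normSq_pos]; intro h; rw [h] at hre; simp at hre
    have hw2 : w.re * w.re + w.im * w.im < 1 := by
      have : Complex.normSq w < 1 := by
        rw [Complex.normSq_eq_norm_sq]; nlinarith [norm_nonneg w]
      rwa [Complex.normSq_apply] at this
    have : 1 - 2 * (-(w * Complex.I) / (1 - w)).im =
        (1 - (w.re * w.re + w.im * w.im)) / Complex.normSq (1 - w) := by
      rw [Complex.div_im, eq_div_iff hns.ne']
      field_simp
      simp [Complex.normSq_apply]
      ring
    rw [this]
    exact div_pos (by linarith) hns

/-- The phase of a finite Blaschke product with zeros `0` and `s`, as a strictly increasing lift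
of the circle map to the real line, of degree `card s + 1`. -/
lemma exists_phase (s : Multiset ℂ) (hs : ∀ a ∈ s, ‖a‖ < 1) :
    ∃ ψ ψ' : ℝ → ℝ, (∀ φ, HasDerivAt ψ (ψ' φ) φ) ∧ (∀ φ, 0 < ψ' φ) ∧
      (∀ φ, ψ (φ + 2 * π) = ψ φ + 2 * π * (Multiset.card s + 1 : ℕ)) ∧
      ∀ φ : ℝ, (X * (s.map fun a => X - C a).prod).eval (Complex.exp (Complex.I * φ)) =
        Complex.exp (Complex.I * ψ φ) * (Complex.exp (Complex.I * φ) ^ (Multiset.card s + 1) *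
          (starRingEnd ℂ)
            ((X * (s.map fun a => X - C a).prod).eval (Complex.exp (Complex.I * φ)))) := by
  induction s using Multiset.induction_on with
  | empty =>
    refine ⟨id, fun _ => 1, fun φ => hasDerivAt_id φ, fun _ => one_pos, by simp, fun φ => ?_⟩
    have := Complex.exp_ne_zero (Complex.I * φ)
    simp [conj_exp_I_mul]
  | cons a s ih =>
    obtain ⟨ψ, ψ', h1, h2, h3, h4⟩ := ih fun b hb => hs b (Multiset.mem_cons_of_mem hb)
    have ha := hs a (Multiset.mem_cons_self a s)
    choose d hd hd0 using exists_hasDerivAt_arg a ha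
    refine ⟨fun φ => ψ φ + (φ - 2 *
      Complex.arg (1 - (starRingEnd ℂ) a * Complex.exp (Complex.I * (φ : ℂ)))),
      fun φ => ψ' φ + (1 - 2 * d φ), fun φ => ?_, fun φ => add_pos (h2 φ) (hd0 φ),
      fun φ => ?_, fun φ => ?_⟩
    · exact (h1 φ).add ((hasDerivAt_id φ).sub ((hd φ).const_mul 2))
    · have : Complex.exp (Complex.I * ((φ + 2 * π : ℝ) : ℂ)) = Complex.exp (Complex.I * φ) := by
        rw [← Complex.exp_periodic (Complex.I * φ)]
        congr 1; push_cast; ring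
      simp only [this, h3, Multiset.card_cons]
      push_cast; ring
    · have h4 := h4 φ
      set z := Complex.exp (Complex.I * (φ : ℂ)) with hz
      have hz0 : z ≠ 0 := Complex.exp_ne_zero _
      set u := 1 - (starRingEnd ℂ) a * z with hu
      -- `z - a = z * conj u`, and `conj u = e^{-2i arg u} * u`.
      have e1 : z - a = Complex.exp (Complex.I * ((φ - 2 * Complex.arg u : ℝ) : ℂ)) *
          (z * (starRingEnd ℂ) (z - a)) := by
        have hl : z * (starRingEnd ℂ) (z - a) = u := by
          rw [map_sub, hz, conj_exp_I_mul, ← hz, hu]; field_simp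
        have hr : z - a = z * (starRingEnd ℂ) u := by
          rw [hu, map_sub, map_mul, Complex.conj_conj, hz, conj_exp_I_mul, ← hz, map_one]
          field_simp
        have hc : (starRingEnd ℂ) u =
            Complex.exp (Complex.I * ((- 2 * Complex.arg u : ℝ) : ℂ)) * u := by
          conv_lhs => rw [← Complex.norm_mul_exp_arg_mul_I u, map_mul, Complex.conj_ofReal,
            mul_comm (Complex.arg u : ℂ), conj_exp_I_mul, ← Complex.exp_neg]
          conv_rhs =>
            enter [2]
            rw [← Complex.norm_mul_exp_arg_mul_I u]
          rw [mul_left_comm, ← Complex.exp_add]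
          congr 2; push_cast; ring
        rw [hl, hr, hc, hz, ← mul_assoc, ← Complex.exp_add]
        congr 2; push_cast; ring
      have e2 : (X * ((a ::ₘ s).map fun a => X - C a).prod).eval z =
          (X * (s.map fun a => X - C a).prod).eval z * (z - a) := by
        simp; ring
      rw [e2, map_mul, Multiset.card_cons]
      conv_lhs => rw [h4, e1]
      rw [Complex.ofReal_add, mul_add, Complex.exp_add]
      ring

/-- The `2n` consecutive multiples of `π` in the range of the phase over `[0, 2π)`. -/
lemma exists_levels (n : ℕ) (ψ : ℝ → ℝ) (hc : Continuous ψ) (hm : StrictMono ψ)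
    (hper : ψ (2 * π) = ψ 0 + 2 * π * n) :
    ∃ (k : ℤ) (t : ℕ → ℝ), ∀ j < 2 * n, t j ∈ Set.Ico 0 (2 * π) ∧ ψ (t j) = π * (k + j : ℤ) := by
  have hpi := Real.pi_pos
  refine ⟨⌈ψ 0 / π⌉, ?_⟩
  have key : ∀ j : ℕ, ∃ t : ℝ, j < 2 * n →
      t ∈ Set.Ico 0 (2 * π) ∧ ψ t = π * (⌈ψ 0 / π⌉ + j : ℤ) := by
    intro j
    by_cases hj : j < 2 * n
    · have a1 : ψ 0 ≤ π * ⌈ψ 0 / π⌉ := by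
        have := Int.le_ceil (ψ 0 / π)
        rw [div_le_iff₀ hpi] at this; linarith
      have a2 : π * ⌈ψ 0 / π⌉ < ψ 0 + π := by
        have := Int.ceil_lt_add_one (ψ 0 / π)
        have h := mul_lt_mul_of_pos_left this hpi
        rw [mul_add, mul_div_cancel₀ _ hpi.ne'] at h; linarith
      have a3 : (j : ℝ) + 1 ≤ 2 * n := by exact_mod_cast hj
      have b1 : ψ 0 ≤ π * (⌈ψ 0 / π⌉ + j : ℤ) := by
        push_cast; nlinarith [mul_nonneg hpi.le (Nat.cast_nonneg (α := ℝ) j)]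
      have b2 : π * (⌈ψ 0 / π⌉ + j : ℤ) < ψ (2 * π) := by
        rw [hper]; push_cast; nlinarith [mul_le_mul_of_nonneg_left a3 hpi.le]
      obtain ⟨t, ht, hte⟩ := intermediate_value_Icc (by positivity : (0 : ℝ) ≤ 2 * π)
        hc.continuousOn ⟨b1, b2.le⟩
      exact ⟨t, fun _ => ⟨⟨ht.1, hm.lt_iff_lt.mp (hte ▸ b2)⟩, hte⟩⟩
    · exact ⟨0, fun h => absurd h hj⟩
  choose t ht using key
  exact ⟨t, ht⟩

/-! ### Zeros of a polynomial with prescribed phase -/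

/-- Differentiation of `G (1 + ε e^{iψ})` at a zero of the second factor. -/
lemma hasDerivAt_of_phase {G : ℝ → ℂ} {ψ : ℝ → ℝ} {d x : ℝ} {ε : ℂ}
    (hG : DifferentiableAt ℝ G x) (hψ : HasDerivAt ψ d x)
    (h0 : ε * Complex.exp (Complex.I * ψ x) = -1) :
    HasDerivAt (fun φ : ℝ => G φ * (1 + ε * Complex.exp (Complex.I * ψ φ)))
      (-(Complex.I * d * G x)) x := by
  have h := hG.hasDerivAt.mul (((hasDerivAt_exp_I_mul hψ).const_mul ε).const_add 1)
  refine h.congr_deriv ?_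
  rw [← mul_assoc ε, h0]; ring

lemma exp_I_mul_injOn {x y : ℝ} (hx : x ∈ Set.Ico 0 (2 * π)) (hy : y ∈ Set.Ico 0 (2 * π))
    (h : Complex.exp (Complex.I * x) = Complex.exp (Complex.I * y)) : x = y := by
  have hc : Circle.exp x = Circle.exp y := by
    ext; simpa [mul_comm] using h
  rw [Circle.exp_eq_exp] at hc
  obtain ⟨m, hm⟩ := hc
  have hpi := Real.pi_pos
  have h1 : (m : ℝ) < 1 := by nlinarith [hx.2, hy.1]
  have h2 : (-1 : ℝ) < m := by nlinarith [hx.1, hy.2]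
  have h1' : m < 1 := by exact_mod_cast h1
  have h2' : -1 < m := by exact_mod_cast h2
  have : m = 0 := by omega
  simpa [this] using hm

/-- A polynomial of degree at most `n` that equals `G (1 + ε e^{iψ})` on the circle and has `n`
distinct zeros there has no others, and all are simple. -/
lemma zeros_of_phase {n : ℕ} (hn : 1 ≤ n) {Q : ℂ[X]} (hQ : Q.natDegree ≤ n) {G : ℝ → ℂ}
    {ψ ψ' : ℝ → ℝ} {ε : ℂ} (hG : Differentiable ℝ G) (hG0 : ∀ φ, G φ ≠ 0)
    (hψ : ∀ φ, HasDerivAt ψ (ψ' φ) φ) (hpos : ∀ φ, 0 < ψ' φ)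
    (hQe : ∀ φ : ℝ, Q.eval (Complex.exp (Complex.I * φ)) =
      G φ * (1 + ε * Complex.exp (Complex.I * ψ φ)))
    (θ : Fin n → ℝ) (hθ : StrictMono θ) (hI : ∀ s, θ s ∈ Set.Ico 0 (2 * π))
    (hz : ∀ s, ε * Complex.exp (Complex.I * ψ (θ s)) = -1) :
    (∀ z : ℂ, Q.eval z = 0 → ‖z‖ = 1) ∧ (∀ z : ℂ, Q.eval z = 0 → Q.derivative.eval z ≠ 0) ∧
      ∀ z : ℂ, Q.eval z = 0 ↔ ∃ s, z = Complex.exp (Complex.I * (θ s : ℂ)) := by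
  have hroot : ∀ s, Q.eval (Complex.exp (Complex.I * (θ s : ℂ))) = 0 := fun s => by
    rw [hQe, hz]; simp
  have hder : ∀ s, Q.derivative.eval (Complex.exp (Complex.I * (θ s : ℂ))) ≠ 0 := by
    intro s h0
    have e1 := hasDerivAt_of_phase (hG (θ s)) (hψ (θ s)) (hz s)
    have e2 := (Q.hasDerivAt (Complex.exp (Complex.I * (θ s : ℂ)))).comp (θ s)
      (hasDerivAt_exp_I_mul (hasDerivAt_id (θ s)))
    have e3 := e2.unique (e1.congr_of_eventuallyEq (Filter.Eventually.of_forall hQe))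
    rw [h0, zero_mul, eq_comm, neg_eq_zero] at e3
    have hp : (ψ' (θ s) : ℂ) ≠ 0 := by exact_mod_cast (hpos (θ s)).ne'
    exact mul_ne_zero (mul_ne_zero Complex.I_ne_zero hp) (hG0 _) e3
  have hQ0 : Q ≠ 0 := by
    rintro rfl
    exact hder ⟨0, hn⟩ (by simp)
  have hiff : ∀ z : ℂ, Q.eval z = 0 ↔ ∃ s, z = Complex.exp (Complex.I * (θ s : ℂ)) := by
    intro z
    refine ⟨fun h => ?_, ?_⟩
    · set S : Finset ℂ := Finset.univ.image fun s => Complex.exp (Complex.I * (θ s : ℂ)) with hS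
      have hSc : S.card = n := by
        rw [hS, Finset.card_image_of_injective, Finset.card_univ, Fintype.card_fin]
        intro s t hst
        exact hθ.injective (exp_I_mul_injOn (hI s) (hI t) hst)
      have hsub : S ⊆ Q.roots.toFinset := by
        intro w hw
        obtain ⟨s, -, rfl⟩ := Finset.mem_image.mp hw
        rw [Multiset.mem_toFinset, mem_roots hQ0]
        exact hroot s
      have hle : Q.roots.toFinset.card ≤ S.card := by
        rw [hSc]
        exact (Multiset.toFinset_card_le _).trans ((card_roots' Q).trans hQ)
      have hzS : z ∈ S := by
        rw [Finset.eq_of_subset_of_card_le hsub hle, Multiset.mem_toFinset, mem_roots hQ0]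
        exact h
      obtain ⟨s, -, hs⟩ := Finset.mem_image.mp hzS
      exact ⟨s, hs.symm⟩
    · rintro ⟨s, rfl⟩
      exact hroot s
  refine ⟨fun z h => ?_, fun z h => ?_, hiff⟩
  · obtain ⟨s, rfl⟩ := (hiff z).mp h
    exact norm_exp_I_mul _
  · obtain ⟨s, rfl⟩ := (hiff z).mp h
    exact hder s

lemma exp_I_mul_pi_mul_of_even {m : ℤ} (hm : Even m) :
    Complex.exp (Complex.I * ((π * (m : ℝ) : ℝ) : ℂ)) = 1 := by
  obtain ⟨r, rfl⟩ := hm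
  rw [Complex.exp_eq_one_iff]
  exact ⟨r, by push_cast; ring⟩

lemma exp_I_mul_pi_mul_of_odd {m : ℤ} (hm : Odd m) :
    Complex.exp (Complex.I * ((π * (m : ℝ) : ℝ) : ℂ)) = -1 := by
  obtain ⟨r, rfl⟩ := hm
  have h := exp_I_mul_pi_mul_of_even (even_two_mul r)
  have e : Complex.I * ((π * ((2 * r + 1 : ℤ) : ℝ) : ℝ) : ℂ) =
      Complex.I * ((π * ((2 * r : ℤ) : ℝ) : ℝ) : ℂ) + π * Complex.I := by
    push_cast; ring
  rw [e, Complex.exp_add, h, Complex.exp_pi_mul_I, one_mul]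

/-! ### Interlacing and positivity -/

theorem stmt10
    (n : ℕ) (hn : 1 ≤ n)
    (p : Polynomial ℂ) (hpmonic : p.Monic) (hpdeg : p.natDegree = n - 1)
    (hpzeros : ∀ z : ℂ, p.eval z = 0 → ‖z‖ < 1)
    (η : ℂ) (hη : ‖η‖ = 1)
    (Pn Qplus Qminus : Polynomial ℂ)
    (hPn : Pn = X * p)
    (hQp : Qplus = C η * pstar n Pn + Pn)
    (hQm : Qminus = C η * pstar n Pn - Pn) :
    -- all zeros on the unit circle
    (∀ z : ℂ, Qplus.eval z = 0 → ‖z‖ = 1) ∧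
    (∀ z : ℂ, Qminus.eval z = 0 → ‖z‖ = 1) ∧
    -- all zeros simple
    (∀ z : ℂ, Qplus.eval z = 0 → Qplus.derivative.eval z ≠ 0) ∧
    (∀ z : ℂ, Qminus.eval z = 0 → Qminus.derivative.eval z ≠ 0) ∧
    -- the zeros of `Qminus` and `Qplus` strictly interlace and the `μ s` are positive
    ∃ θp θm : Fin n → ℝ,
      StrictMono θp ∧ StrictMono θm ∧
      (∀ s, θp s ∈ Set.Ico 0 (2 * π)) ∧ (∀ s, θm s ∈ Set.Ico 0 (2 * π)) ∧
      (∀ z : ℂ, Qplus.eval z = 0 ↔ ∃ s, z = Complex.exp (Complex.I * (θp s : ℂ))) ∧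
      (∀ z : ℂ, Qminus.eval z = 0 ↔ ∃ s, z = Complex.exp (Complex.I * (θm s : ℂ))) ∧
      (((∀ s : Fin n, θp s < θm s) ∧
          ∀ (s : Fin n) (h : s.val + 1 < n), θm s < θp ⟨s.val + 1, h⟩) ∨
        ((∀ s : Fin n, θm s < θp s) ∧
          ∀ (s : Fin n) (h : s.val + 1 < n), θp s < θm ⟨s.val + 1, h⟩)) ∧
      ∀ s : Fin n, ∃ r : ℝ, 0 < r ∧
        Qminus.eval (Complex.exp (Complex.I * (θp s : ℂ))) /
            (2 * Complex.I *
              deriv (fun φ : ℝ => (Pn + C η * pstar n Pn).eval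
                (Complex.exp (Complex.I * (φ : ℂ)))) (θp s)) = (r : ℂ) := by
  have hp0 : p ≠ 0 := hpmonic.ne_zero
  have hsplit : p.Splits := IsAlgClosed.splits p
  have hcard : Multiset.card p.roots + 1 = n := by
    rw [← hsplit.natDegree_eq_card_roots, hpdeg]; omega
  have hprod : (p.roots.map fun a => X - C a).prod = p :=
    (hsplit.eq_prod_roots_of_monic hpmonic).symm
  obtain ⟨ψ, ψ', hψ, hpos, hper, hphase⟩ := exists_phase p.roots fun a ha =>
    hpzeros a (mem_roots hp0 |>.mp ha)
  rw [hprod, ← hPn, hcard] at hphase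
  rw [hcard] at hper
  have hPdeg : Pn.natDegree ≤ n := by
    rw [hPn]
    refine natDegree_mul_le.trans ?_
    rw [natDegree_X, hpdeg]; omega
  have hη0 : η ≠ 0 := by rintro rfl; simp at hη
  obtain ⟨α, hα⟩ : ∃ α : ℝ, η = Complex.exp (Complex.I * α) :=
    ⟨Complex.arg η, by
      conv_lhs => rw [← Complex.norm_mul_exp_arg_mul_I η, hη]
      simp [mul_comm]⟩
  -- Absorb `η` into the phase.
  set Ψ : ℝ → ℝ := fun φ => ψ φ - α with hΨdef
  have hΨ : ∀ φ, HasDerivAt Ψ (ψ' φ) φ := fun φ => (hψ φ).sub_const α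
  have hΨmono : StrictMono Ψ := strictMono_of_deriv_pos fun φ => by
    rw [(hΨ φ).deriv]; exact hpos φ
  have hΨc : Continuous Ψ := continuous_iff_continuousAt.mpr fun φ => (hΨ φ).continuousAt
  set G : ℝ → ℂ := fun φ => (C η * pstar n Pn).eval (Complex.exp (Complex.I * φ)) with hGdef
  have hGd : Differentiable ℝ G := by
    intro φ
    have h := ((C η * pstar n Pn).hasDerivAt (Complex.exp (Complex.I * (φ : ℂ)))).comp φ
      (hasDerivAt_exp_I_mul (hasDerivAt_id φ))
    exact h.differentiableAt
  have hG0 : ∀ φ, G φ ≠ 0 := by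
    intro φ h
    have hz0 : Complex.exp (Complex.I * (φ : ℂ)) ≠ 0 := Complex.exp_ne_zero _
    rw [hGdef] at h
    simp only [eval_mul, eval_C] at h
    rw [pstar_eval_circle n Pn hPdeg, hPn] at h
    have h' := (mul_eq_zero.mp ((mul_eq_zero.mp h).resolve_left hη0)).resolve_left
      (pow_ne_zero _ hz0)
    rw [map_eq_zero, eval_mul, eval_X] at h'
    have h'' := hpzeros _ ((mul_eq_zero.mp h').resolve_left hz0)
    rw [norm_exp_I_mul] at h''
    exact lt_irrefl _ h''
  have hPG : ∀ φ : ℝ, Pn.eval (Complex.exp (Complex.I * φ)) =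
      G φ * Complex.exp (Complex.I * Ψ φ) := by
    intro φ
    rw [hphase φ, ← pstar_eval_circle n Pn hPdeg]
    simp only [hGdef, hΨdef, eval_mul, eval_C, Complex.ofReal_sub, mul_sub, Complex.exp_sub]
    rw [← hα]
    field_simp
  have hQpe : ∀ φ : ℝ, Qplus.eval (Complex.exp (Complex.I * φ)) =
      G φ * (1 + 1 * Complex.exp (Complex.I * Ψ φ)) := by
    intro φ
    rw [hQp, eval_add, hPG]; simp only [hGdef]; ring
  have hQme : ∀ φ : ℝ, Qminus.eval (Complex.exp (Complex.I * φ)) =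
      G φ * (1 + (-1) * Complex.exp (Complex.I * Ψ φ)) := by
    intro φ
    rw [hQm, eval_sub, hPG]; simp only [hGdef]; ring
  have hCdeg : (C η * pstar n Pn).natDegree ≤ n :=
    (natDegree_C_mul_le _ _).trans (pstar_natDegree_le n Pn hPdeg)
  have hQpdeg : Qplus.natDegree ≤ n := hQp ▸ natDegree_add_le_of_degree_le hCdeg hPdeg
  have hQmdeg : Qminus.natDegree ≤ n := hQm ▸ (natDegree_sub_le_of_le hCdeg hPdeg).trans (max_self n).le
  obtain ⟨k, t, ht⟩ := exists_levels n Ψ hΨc hΨmono (by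
    have := hper 0
    rw [zero_add] at this
    simp only [hΨdef, this]; ring)
  have htlt : ∀ i j, i < j → j < 2 * n → t i < t j := by
    intro i j hij hj
    rw [← hΨmono.lt_iff_lt, (ht i (hij.trans hj)).2, (ht j hj).2]
    refine mul_lt_mul_of_pos_left ?_ Real.pi_pos
    exact_mod_cast (by omega : k + (i : ℤ) < k + j)
  -- It remains to choose the angles among the `t j`, according to the parity of `k`.
  suffices H : ∃ θp θm : Fin n → ℝ, StrictMono θp ∧ StrictMono θm ∧
      (∀ s, θp s ∈ Set.Ico 0 (2 * π)) ∧ (∀ s, θm s ∈ Set.Ico 0 (2 * π)) ∧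
      (∀ s, Complex.exp (Complex.I * Ψ (θp s)) = -1) ∧
      (∀ s, Complex.exp (Complex.I * Ψ (θm s)) = 1) ∧
      (((∀ s : Fin n, θp s < θm s) ∧
          ∀ (s : Fin n) (h : s.val + 1 < n), θm s < θp ⟨s.val + 1, h⟩) ∨
        ((∀ s : Fin n, θm s < θp s) ∧
          ∀ (s : Fin n) (h : s.val + 1 < n), θp s < θm ⟨s.val + 1, h⟩)) by
    obtain ⟨θp, θm, hmp, hmm, hIp, hIm, hep, hem, hlace⟩ := H
    obtain ⟨p1, p2, p3⟩ := zeros_of_phase hn hQpdeg hGd hG0 hΨ hpos hQpe θp hmp hIp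
      (fun s => by rw [hep, one_mul])
    obtain ⟨m1, m2, m3⟩ := zeros_of_phase hn hQmdeg hGd hG0 hΨ hpos hQme θm hmm hIm
      (fun s => by rw [hem, mul_one])
    refine ⟨p1, m1, p2, m2, θp, θm, hmp, hmm, hIp, hIm, p3, m3, hlace, fun s => ?_⟩
    refine ⟨(ψ' (θp s))⁻¹, inv_pos.mpr (hpos _), ?_⟩
    have hd := (hasDerivAt_of_phase (ε := 1) (hGd (θp s)) (hΨ (θp s))
      (by rw [hep, one_mul])).congr_of_eventuallyEq (Filter.Eventually.of_forall hQpe)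
    rw [add_comm Pn, ← hQp, hd.deriv, hQme, hep]
    have hg := hG0 (θp s)
    have hp : (ψ' (θp s) : ℂ) ≠ 0 := by exact_mod_cast (hpos (θp s)).ne'
    have hI2 := Complex.I_sq
    push_cast
    rw [div_eq_iff (by simp [hg, hp])]
    field_simp
    rw [hI2]; ring
  have hmono0 : StrictMono fun s : Fin n => t (2 * s.val) := fun i j hij =>
    htlt _ _ (by have : i.val < j.val := hij; omega) (by omega)
  have hmono1 : StrictMono fun s : Fin n => t (2 * s.val + 1) := fun i j hij =>
    htlt _ _ (by have : i.val < j.val := hij; omega) (by omega)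
  have hlace1 : ∀ s : Fin n, t (2 * s.val) < t (2 * s.val + 1) := fun s =>
    htlt _ _ (by omega) (by omega)
  have hlace2 : ∀ (s : Fin n), s.val + 1 < n → t (2 * s.val + 1) < t (2 * (s.val + 1)) :=
    fun s h => htlt _ _ (by omega) (by omega)
  have hI0 : ∀ s : Fin n, t (2 * s.val) ∈ Set.Ico 0 (2 * π) := fun s => (ht _ (by omega)).1
  have hI1 : ∀ s : Fin n, t (2 * s.val + 1) ∈ Set.Ico 0 (2 * π) := fun s => (ht _ (by omega)).1
  rcases Int.even_or_odd k with hk | hk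
  · refine ⟨_, _, hmono1, hmono0, hI1, hI0, fun s => ?_, fun s => ?_, Or.inr ⟨hlace1, hlace2⟩⟩
    · rw [(ht _ (by omega)).2]
      exact exp_I_mul_pi_mul_of_odd (by push_cast; grind)
    · rw [(ht _ (by omega)).2]
      exact exp_I_mul_pi_mul_of_even (by push_cast; grind)
  · refine ⟨_, _, hmono0, hmono1, hI0, hI1, fun s => ?_, fun s => ?_, Or.inl ⟨hlace1, hlace2⟩⟩
    · rw [(ht _ (by omega)).2]
      exact exp_I_mul_pi_mul_of_odd (by push_cast; grind)
    · rw [(ht _ (by omega)).2]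
      exact exp_I_mul_pi_mul_of_even (by push_cast; grind)
end
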